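/- arXiv:2505.19719 — 3 statements merged into one kernel-verified Lean document; each statement's English description precedes it below -/
import Mathlib

section
/- Let E be a real inner product space, let x, y ∈ E with d = dist(x, y) > 0, and let r₁, r₂ > 0 satisfy |r₁ - r₂| ≤ d ≤ r₁ + r₂. Let p = x + ((r₁ - r₂ + d)/(2d)) · (y - x). Then the closed ball of radius (r₁ + r₂ - d)/2 centered at p is contained in the intersection of the closed ball of radius r₁ centered at x and the closed ball of radius r₂ centered at y. -/
theorem ball_subset_inter_closedBalls {E : Type*} [NormedAddCommGroup E]
    [InnerProductSpace ℝ E] (x y : E) (r₁ r₂ : ℝ)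
    (hd : 0 < dist x y) (hr₁ : 0 < r₁) (hr₂ : 0 < r₂)
    (hlo : |r₁ - r₂| ≤ dist x y) (hhi : dist x y ≤ r₁ + r₂) :
    Metric.closedBall (x + ((r₁ - r₂ + dist x y) / (2 * dist x y)) • (y - x))
        ((r₁ + r₂ - dist x y) / 2)
      ⊆ Metric.closedBall x r₁ ∩ Metric.closedBall y r₂ := by
  obtain ⟨h1, h2⟩ := abs_le.mp hlo
  have hn : ‖y - x‖ = dist x y := by rw [dist_comm, dist_eq_norm]
  generalize dist x y = d at *
  have hx : dist (x + ((r₁ - r₂ + d) / (2 * d)) • (y - x)) x = (r₁ - r₂ + d) / 2 := by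
    rw [dist_eq_norm, add_sub_cancel_left, norm_smul, hn, Real.norm_eq_abs,
      abs_of_nonneg (div_nonneg (by linarith) (by linarith))]
    field_simp
  have hy : dist (x + ((r₁ - r₂ + d) / (2 * d)) • (y - x)) y = (r₂ - r₁ + d) / 2 := by
    have e : x + ((r₁ - r₂ + d) / (2 * d)) • (y - x) - y
        = (-((r₂ - r₁ + d) / (2 * d))) • (y - x) := by
      have : -((r₂ - r₁ + d) / (2 * d)) = (r₁ - r₂ + d) / (2 * d) - 1 := by
        field_simp
        ring
      rw [this, sub_smul, one_smul]
      abel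
    rw [dist_eq_norm, e, norm_smul, hn, norm_neg, Real.norm_eq_abs,
      abs_of_nonneg (div_nonneg (by linarith) (by linarith))]
    field_simp
  intro z hz
  rw [Metric.mem_closedBall] at hz
  refine ⟨Metric.mem_closedBall.mpr ?_, Metric.mem_closedBall.mpr ?_⟩
  · have := dist_triangle z (x + ((r₁ - r₂ + d) / (2 * d)) • (y - x)) x
    linarith
  · have := dist_triangle z (x + ((r₁ - r₂ + d) / (2 * d)) • (y - x)) y
    linarith
end

section
/- Let E be a real inner product space, let x, y ∈ E with d = dist(x, y), and let r₁, r₂ ≥ 0 with d ≤ 2·max(r₁, r₂). Then every point z with dist(z, x) ≤ r₁ and dist(z, y) ≤ r₂ satisfies dist(z, m) ≤ √( (max(r₁, r₂))² - (d/2)² ), where m = (x + y)/2 is the midpoint of x and y; hence the intersection of the two closed balls is contained in the closed ball of radius √((max(r₁,r₂))² - (d/2)²) centered at the midpoint of x and y. -/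
theorem inter_closedBalls_subset_ball_midpoint {E : Type*} [NormedAddCommGroup E]
    [InnerProductSpace ℝ E] (x y : E) (r₁ r₂ : ℝ)
    (hr₁ : 0 ≤ r₁) (hr₂ : 0 ≤ r₂) (hd : dist x y ≤ 2 * max r₁ r₂)
    (z : E) (hz₁ : dist z x ≤ r₁) (hz₂ : dist z y ≤ r₂) :
    dist z (midpoint ℝ x y) ≤ Real.sqrt ((max r₁ r₂) ^ 2 - (dist x y / 2) ^ 2) := by
  have key :=
    EuclideanGeometry.dist_sq_add_dist_sq_eq_two_mul_dist_midpoint_sq_add_half_dist_sq z x y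
  have h1 : dist z x ^ 2 ≤ (max r₁ r₂) ^ 2 :=
    pow_le_pow_left₀ dist_nonneg (hz₁.trans (le_max_left _ _)) 2
  have h2 : dist z y ^ 2 ≤ (max r₁ r₂) ^ 2 :=
    pow_le_pow_left₀ dist_nonneg (hz₂.trans (le_max_right _ _)) 2
  apply Real.le_sqrt_of_sq_le
  linarith
end

section
/- Work in the D-dimensional Euclidean space ℝ^D (D ≥ 1) with Lebesgue measure, and let V(1) denote the volume of the unit ball. Let x, y ∈ ℝ^D with d = dist(x, y) > 0 and let r₁, r₂ > 0 satisfy |r₁ - r₂| ≤ d ≤ r₁ + r₂. Then the volume A(r₁, r₂, d) of the intersection of the closed ball of radius r₁ centered at x and the closed ball of radius r₂ centered at y satisfies V(1) · ((r₁ + r₂ - d)/2)^D ≤ A(r₁, r₂, d) ≤ V(1) · ( (max(r₁, r₂))² - (d/2)² )^{D/2}. -/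
open MeasureTheory

theorem vol_closedBall_aux (D : ℕ) (c : EuclideanSpace ℝ (Fin D)) (r : ℝ) (hr : 0 ≤ r) :
    (volume (Metric.closedBall c r)).toReal
      = (volume (Metric.closedBall (0 : EuclideanSpace ℝ (Fin D)) 1)).toReal * r ^ D := by
  rw [Measure.addHaar_closedBall' volume c hr, ENNReal.toReal_mul,
    ENNReal.toReal_ofReal (by positivity), finrank_euclideanSpace_fin, mul_comm]

theorem volume_inter_balls_bounds (D : ℕ) (hD : 1 ≤ D)
    (x y : EuclideanSpace ℝ (Fin D)) (r₁ r₂ : ℝ)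
    (hd : 0 < dist x y) (hr₁ : 0 < r₁) (hr₂ : 0 < r₂)
    (hlo : |r₁ - r₂| ≤ dist x y) (hhi : dist x y ≤ r₁ + r₂) :
    (volume (Metric.closedBall (0 : EuclideanSpace ℝ (Fin D)) 1)).toReal
        * ((r₁ + r₂ - dist x y) / 2) ^ D
      ≤ (volume (Metric.closedBall x r₁ ∩ Metric.closedBall y r₂)).toReal ∧
    (volume (Metric.closedBall x r₁ ∩ Metric.closedBall y r₂)).toReal
      ≤ (volume (Metric.closedBall (0 : EuclideanSpace ℝ (Fin D)) 1)).toReal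
          * ((max r₁ r₂) ^ 2 - (dist x y / 2) ^ 2) ^ ((D : ℝ) / 2) := by
  have hfin : ∀ (c : EuclideanSpace ℝ (Fin D)) (r : ℝ), volume (Metric.closedBall c r) ≠ ⊤ :=
    fun c r => measure_closedBall_lt_top.ne
  have hab := abs_le.mp hlo
  constructor
  · rw [← vol_closedBall_aux D (AffineMap.lineMap x y ((r₁ - r₂ + dist x y) / 2 / dist x y)) _
      (by linarith)]
    refine ENNReal.toReal_mono (measure_ne_top_of_subset Set.inter_subset_left (hfin x r₁))
      (measure_mono (Set.subset_inter ?_ ?_))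
    · apply Metric.closedBall_subset_closedBall'
      rw [dist_lineMap_left, Real.norm_of_nonneg (div_nonneg (by linarith) hd.le),
        div_mul_cancel₀ _ hd.ne']
      linarith
    · apply Metric.closedBall_subset_closedBall'
      have h1 : 1 - (r₁ - r₂ + dist x y) / 2 / dist x y
          = (dist x y - r₁ + r₂) / 2 / dist x y := by
        field_simp
        ring
      rw [dist_lineMap_right, h1, Real.norm_of_nonneg (div_nonneg (by linarith) hd.le),
        div_mul_cancel₀ _ hd.ne']
      linarith
  · have hM1 := le_max_left r₁ r₂
    have hM2 := le_max_right r₁ r₂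
    set M := max r₁ r₂ with hM
    have hnn : 0 ≤ M ^ 2 - (dist x y / 2) ^ 2 := by nlinarith
    have hpow : (M ^ 2 - (dist x y / 2) ^ 2) ^ ((D : ℝ) / 2)
        = (Real.sqrt (M ^ 2 - (dist x y / 2) ^ 2)) ^ D := by
      rw [Real.sqrt_eq_rpow, ← Real.rpow_natCast _ D, ← Real.rpow_mul hnn]
      congr 1
      ring
    rw [hpow, ← vol_closedBall_aux D (midpoint ℝ x y) _ (Real.sqrt_nonneg _)]
    refine ENNReal.toReal_mono (hfin _ _) (measure_mono ?_)
    rintro z ⟨hz1, hz2⟩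
    rw [Metric.mem_closedBall] at hz1 hz2 ⊢
    apply Real.le_sqrt_of_sq_le
    have e1 := parallelogram_law_with_norm ℝ (z - x) (z - y)
    have e2 : z - x + (z - y) = (2 : ℝ) • (z - midpoint ℝ x y) := by
      rw [midpoint_eq_smul_add, smul_sub, smul_smul, two_smul]
      norm_num
      abel
    have e3 : z - x - (z - y) = y - x := by abel
    rw [e2, e3, norm_smul, ← dist_eq_norm, ← dist_eq_norm, ← dist_eq_norm, ← dist_eq_norm,
      dist_comm y x, Real.norm_of_nonneg (by norm_num)] at e1
    have f1 : dist z x * dist z x ≤ M * M :=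
      mul_self_le_mul_self dist_nonneg (hz1.trans hM1)
    have f2 : dist z y * dist z y ≤ M * M :=
      mul_self_le_mul_self dist_nonneg (hz2.trans hM2)
    nlinarith
end
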